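/- Let f : ℝ^d → ℝ be L-smooth, let μ > 0, and let f_μ be its uniform smoothing over the unit ball. Then for every x ∈ ℝ^d, ‖∇f_μ(x) − ∇f(x)‖² ≤ μ² L² d² / 4. -/

import Mathlib

open MeasureTheory ProbabilityTheory

/-- The uniform distribution on the closed unit ball of `ℝ^d`. -/
noncomputable def uniformBall (d : ℕ) : Measure (EuclideanSpace ℝ (Fin d)) :=
  (volume (Metric.closedBall (0 : EuclideanSpace ℝ (Fin d)) 1))⁻¹ •
    volume.restrict (Metric.closedBall (0 : EuclideanSpace ℝ (Fin d)) 1)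

/-- The uniform distribution on the unit sphere of `ℝ^d`, viewed as a measure on `ℝ^d`. -/
noncomputable def uniformSphere (d : ℕ) : Measure (EuclideanSpace ℝ (Fin d)) :=
  ((volume : Measure (EuclideanSpace ℝ (Fin d))).toSphere Set.univ)⁻¹ •
    Measure.map Subtype.val (volume : Measure (EuclideanSpace ℝ (Fin d))).toSphere

/-!
Differentiating under the integral, `∇f_μ(x) - ∇f(x)` is the mean of `∇f(x + μv) - ∇f(x)`, whose
norm is at most `Lμ‖v‖`. In polar coordinates the mean of `‖v‖` over the unit ball is
`∫₀¹ d rᵈ dr = d / (d + 1)`, and `d / (d + 1) ≤ d / 2` for every natural number `d`.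
-/

open Metric Module

open scoped Gradient NNReal

section RandomTranslation

variable {Ω E F : Type*} [MeasurableSpace Ω] {P : Measure Ω}
  [NormedAddCommGroup E] [NormedSpace ℝ E] [NormedAddCommGroup F] [NormedSpace ℝ F]
  {f : E → F} {K : ℝ≥0} {Z : Ω → E}

lemma integrable_fderiv_comp_add [IsFiniteMeasure P] (hlip : LipschitzWith K (fderiv ℝ f))
    (hZ : Integrable Z P) (x : E) : Integrable (fun ω ↦ fderiv ℝ f (x + Z ω)) P := by
  have hmeas : AEStronglyMeasurable (fun ω ↦ fderiv ℝ f (x + Z ω)) P :=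
    hlip.continuous.comp_aestronglyMeasurable (hZ.aestronglyMeasurable.const_add x)
  refine ((integrable_const ‖fderiv ℝ f x‖).add (hZ.norm.const_mul K)).mono' hmeas (.of_forall ?_)
  intro ω
  calc ‖fderiv ℝ f (x + Z ω)‖
    _ ≤ ‖fderiv ℝ f x‖ + ‖fderiv ℝ f (x + Z ω) - fderiv ℝ f x‖ := norm_le_norm_add_norm_sub' _ _
    _ ≤ ‖fderiv ℝ f x‖ + K * ‖Z ω‖ := by
      gcongr
      simpa only [add_sub_cancel_left] using hlip.norm_sub_le (x + Z ω) x

lemma hasFDerivAt_integral_comp_add [IsFiniteMeasure P] (hdiff : Differentiable ℝ f)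
    (hlip : LipschitzWith K (fderiv ℝ f)) (hZ : Integrable Z P) {x : E}
    (hfZ : Integrable (fun ω ↦ f (x + Z ω)) P) :
    HasFDerivAt (fun y ↦ ∫ ω, f (y + Z ω) ∂P) (∫ ω, fderiv ℝ f (x + Z ω) ∂P) x := by
  have hmeas (y : E) : AEStronglyMeasurable (fun ω ↦ f (y + Z ω)) P :=
    hdiff.continuous.comp_aestronglyMeasurable (hZ.aestronglyMeasurable.const_add y)
  have hint := integrable_fderiv_comp_add hlip hZ x
  refine hasFDerivAt_integral_of_dominated_of_fderiv_le
    (F' := fun y ω ↦ fderiv ℝ f (y + Z ω)) (bound := fun ω ↦ ‖fderiv ℝ f (x + Z ω)‖ + K)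
    (ball_mem_nhds x one_pos) (.of_forall hmeas) hfZ hint.aestronglyMeasurable
    (.of_forall fun ω y hy ↦ ?_) (hint.norm.add (integrable_const _)) (.of_forall fun ω y _ ↦ ?_)
  · have hyx : ‖y - x‖ ≤ 1 := (mem_ball_iff_norm.mp hy).le
    calc ‖fderiv ℝ f (y + Z ω)‖
      _ ≤ ‖fderiv ℝ f (x + Z ω)‖ + ‖fderiv ℝ f (y + Z ω) - fderiv ℝ f (x + Z ω)‖ :=
        norm_le_norm_add_norm_sub' _ _
      _ ≤ ‖fderiv ℝ f (x + Z ω)‖ + K * ‖y - x‖ := by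
        gcongr
        simpa only [add_sub_add_right_eq_sub] using hlip.norm_sub_le (y + Z ω) (x + Z ω)
      _ ≤ ‖fderiv ℝ f (x + Z ω)‖ + K := by
        gcongr
        exact mul_le_of_le_one_right K.coe_nonneg hyx
  · exact (hasFDerivAt_comp_add_right (Z ω)).mpr (hdiff (y + Z ω)).hasFDerivAt

lemma norm_fderiv_integral_comp_add_sub_fderiv_le [CompleteSpace F] [IsProbabilityMeasure P]
    (hdiff : Differentiable ℝ f) (hlip : LipschitzWith K (fderiv ℝ f)) (hZ : Integrable Z P) {x : E}
    (hfZ : Integrable (fun ω ↦ f (x + Z ω)) P) :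
    ‖fderiv ℝ (fun y ↦ ∫ ω, f (y + Z ω) ∂P) x - fderiv ℝ f x‖ ≤ K * ∫ ω, ‖Z ω‖ ∂P := by
  have hmean : fderiv ℝ (fun y ↦ ∫ ω, f (y + Z ω) ∂P) x - fderiv ℝ f x
      = ∫ ω, (fderiv ℝ f (x + Z ω) - fderiv ℝ f x) ∂P := by
    rw [(hasFDerivAt_integral_comp_add hdiff hlip hZ hfZ).fderiv,
      integral_sub (integrable_fderiv_comp_add hlip hZ x) (integrable_const _), integral_const,
      probReal_univ, one_smul]
  rw [hmean, ← integral_const_mul]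
  refine norm_integral_le_of_norm_le (hZ.norm.const_mul _) (.of_forall fun ω ↦ ?_)
  simpa only [add_sub_cancel_left] using hlip.norm_sub_le (x + Z ω) x

end RandomTranslation

lemma integrable_cond_of_continuousOn {X G : Type*} [TopologicalSpace X] [T2Space X]
    [MeasurableSpace X] [OpensMeasurableSpace X] [NormedAddCommGroup G] {ν : Measure X}
    [IsFiniteMeasureOnCompacts ν] {s : Set X} {g : X → G} (hs : IsCompact s)
    (hg : ContinuousOn g s) : Integrable g ν[|s] := by
  rcases eq_or_ne (ν s) 0 with hνs | hνs
  · simp [cond_eq_zero_of_meas_eq_zero hνs]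
  · exact (hg.integrableOn_compact hs).smul_measure (ENNReal.inv_ne_top.mpr hνs)

section Ball

variable {E F : Type*} [NormedAddCommGroup E] [NormedSpace ℝ E] [FiniteDimensional ℝ E]
  [MeasurableSpace E] [BorelSpace E] (ν : Measure E) [ν.IsAddHaarMeasure]
  [NormedAddCommGroup F] [NormedSpace ℝ F]

lemma setIntegral_closedBall_norm {r : ℝ} (hr : 0 ≤ r) :
    ∫ v in closedBall (0 : E) r, ‖v‖ ∂ν
      = finrank ℝ E / (finrank ℝ E + 1) * r * ν.real (closedBall 0 r) := by
  rcases subsingleton_or_nontrivial E with _ | _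
  · simp [Subsingleton.elim _ (0 : E), finrank_zero_of_subsingleton]
  have hradial : ∫ v in closedBall (0 : E) r, ‖v‖ ∂ν
      = ∫ v, (Set.Iic r).indicator id ‖v‖ ∂ν := by
    have hball : closedBall (0 : E) r = norm ⁻¹' Set.Iic r := by
      ext v
      exact mem_closedBall_zero_iff
    rw [← integral_indicator measurableSet_closedBall, hball]
    rfl
  have hweight : (fun t : ℝ ↦ t ^ (finrank ℝ E - 1) • (Set.Iic r).indicator id t)
      = (Set.Iic r).indicator (· ^ finrank ℝ E) := by
    ext t
    simp [Set.indicator_apply, ← pow_succ, Nat.sub_add_cancel (finrank_pos (R := ℝ) (M := E))]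
  rw [hradial, integral_fun_norm_addHaar, hweight, setIntegral_indicator measurableSet_Iic,
    Set.Ioi_inter_Iic, ← intervalIntegral.integral_of_le hr, integral_pow,
    Measure.addHaar_real_closedBall ν 0 hr]
  simp only [nsmul_eq_mul, smul_eq_mul, zero_pow (Nat.succ_ne_zero _), sub_zero, pow_succ]
  field_simp

lemma integral_norm_cond_closedBall {r : ℝ} (hr : 0 < r) :
    ∫ v, ‖v‖ ∂ν[|closedBall (0 : E) r] = finrank ℝ E / (finrank ℝ E + 1) * r := by
  have hvol : ν.real (closedBall (0 : E) r) ≠ 0 :=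
    (ENNReal.toReal_pos (measure_closedBall_pos ν 0 hr).ne' measure_closedBall_lt_top.ne).ne'
  rw [ProbabilityTheory.cond, integral_smul_measure, setIntegral_closedBall_norm ν hr.le,
    ENNReal.toReal_inv, ← measureReal_def, smul_eq_mul]
  field_simp

variable [CompleteSpace F] {f : E → F}

lemma norm_fderiv_integral_cond_closedBall_sub_fderiv_le {K : ℝ≥0} (hdiff : Differentiable ℝ f)
    (hlip : LipschitzWith K (fderiv ℝ f)) (μ : ℝ) (x : E) :
    ‖fderiv ℝ (fun y ↦ ∫ v, f (y + μ • v) ∂ν[|closedBall 0 1]) x - fderiv ℝ f x‖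
      ≤ K * |μ| * (finrank ℝ E / (finrank ℝ E + 1)) := by
  have : IsProbabilityMeasure ν[|closedBall (0 : E) 1] :=
    cond_isProbabilityMeasure_of_finite (measure_closedBall_pos ν 0 one_pos).ne'
      measure_closedBall_lt_top.ne
  have hf := hdiff.continuous
  calc ‖fderiv ℝ (fun y ↦ ∫ v, f (y + μ • v) ∂ν[|closedBall 0 1]) x - fderiv ℝ f x‖
    _ ≤ K * ∫ v, ‖μ • v‖ ∂ν[|closedBall 0 1] :=
      norm_fderiv_integral_comp_add_sub_fderiv_le hdiff hlip
        (integrable_cond_of_continuousOn (isCompact_closedBall 0 1) (by fun_prop))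
        (integrable_cond_of_continuousOn (isCompact_closedBall 0 1) (by fun_prop))
    _ = K * |μ| * (finrank ℝ E / (finrank ℝ E + 1)) := by
      simp_rw [norm_smul, integral_const_mul, integral_norm_cond_closedBall ν one_pos,
        Real.norm_eq_abs, mul_one, mul_assoc]

theorem uniform_smoothing_gradient_bound_general {L : ℝ} (hdiff : Differentiable ℝ f)
    (hlip : ∀ x y, ‖fderiv ℝ f x - fderiv ℝ f y‖ ≤ L * ‖x - y‖) (μ : ℝ) (x : E) :
    ‖fderiv ℝ (fun y ↦ ∫ v, f (y + μ • v) ∂ν[|closedBall 0 1]) x - fderiv ℝ f x‖ ^ 2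
      ≤ μ ^ 2 * L ^ 2 * (finrank ℝ E : ℝ) ^ 2 / 4 := by
  have hlip' : LipschitzWith L.toNNReal (fderiv ℝ f) :=
    .of_dist_le' fun x y ↦ by simpa only [dist_eq_norm] using hlip x y
  have hL : (L.toNNReal : ℝ) ≤ |L| := max_le (le_abs_self L) (abs_nonneg L)
  set d : ℕ := finrank ℝ E
  have hd : (d : ℝ) / (d + 1) ≤ d / 2 := by
    rcases d.eq_zero_or_pos with hd0 | hd_pos
    · simp [hd0]
    · gcongr
      exact_mod_cast Nat.succ_le_succ hd_pos
  calc _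
    _ ≤ (L.toNNReal * |μ| * (d / (d + 1))) ^ 2 := by
      gcongr
      exact norm_fderiv_integral_cond_closedBall_sub_fderiv_le ν hdiff hlip' μ x
    _ ≤ (|L| * |μ| * (d / 2)) ^ 2 := by gcongr
    _ = μ ^ 2 * L ^ 2 * (d : ℝ) ^ 2 / 4 := by
      rw [mul_pow, mul_pow, sq_abs, sq_abs]
      ring

end Ball

lemma uniformBall_eq_cond (d : ℕ) : uniformBall d = volume[|closedBall 0 1] := rfl

lemma norm_gradient_sub_gradient {𝕜 E : Type*} [RCLike 𝕜] [NormedAddCommGroup E]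
    [InnerProductSpace 𝕜 E] [CompleteSpace E] (f g : E → 𝕜) (x y : E) :
    ‖∇ f x - ∇ g y‖ = ‖fderiv 𝕜 f x - fderiv 𝕜 g y‖ := by
  rw [← (InnerProductSpace.toDual 𝕜 E).norm_map, map_sub, toDual_gradient, toDual_gradient]

/-- The gradient of the uniform smoothing `f_μ` over the unit ball of an `L`-smooth function
satisfies `‖∇f_μ(x) − ∇f(x)‖² ≤ μ² L² d² / 4`. -/
theorem uniform_smoothing_gradient_bound
    (d : ℕ) (L μ : ℝ) (hμ : 0 < μ)
    (f : EuclideanSpace ℝ (Fin d) → ℝ)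
    (hdiff : Differentiable ℝ f)
    (hlip : ∀ x y, ‖gradient f x - gradient f y‖ ≤ L * ‖x - y‖)
    (fμ : EuclideanSpace ℝ (Fin d) → ℝ)
    (hfμ : ∀ x, fμ x = ∫ v, f (x + μ • v) ∂(uniformBall d))
    (x : EuclideanSpace ℝ (Fin d)) :
    ‖gradient fμ x - gradient f x‖ ^ 2 ≤ μ ^ 2 * L ^ 2 * (d : ℝ) ^ 2 / 4 := by
  obtain rfl := funext hfμ
  simp only [norm_gradient_sub_gradient, uniformBall_eq_cond] at hlip ⊢
  simpa only [finrank_euclideanSpace_fin] using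
    uniform_smoothing_gradient_bound_general volume hdiff hlip μ x
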